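/- arXiv:0903.2566 — 3 statements merged into one kernel-verified Lean document; each statement's English description precedes it below -/
import Mathlib

section
/- Every CFG-ring is von Neumann regular: if A is a commutative reduced ring and there exist x₁,…,xₙ ∈ A with ∏ᵢ₌₁ⁿ (x − xᵢ) = 0 for all x ∈ A, then for every a ∈ A there exists b ∈ A with a = a²b. -/
/-!
Modulo a prime, the product identity at `y = 1, a, …, aⁿ` puts these `n + 1` powers among the `n`
residues of the `xᵢ`, so two of them agree. Hence `a` is there `0` or a root of unity of order at
most `n`, and in both cases `a ^ (n! + 1) = a`. The exponent does not depend on the prime, so the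
identity holds in the reduced ring itself.
-/

open Finset

open scoped Nat

theorem pow_factorial_add_one_eq_self_of_pow_eq_pow {M : Type*} [MonoidWithZero M]
    [IsLeftCancelMulZero M] {a : M} {j k n : ℕ} (hjk : j < k) (hkn : k ≤ n)
    (h : a ^ j = a ^ k) : a ^ (n ! + 1) = a := by
  obtain rfl | ha := eq_or_ne a 0
  · exact zero_pow (Nat.succ_ne_zero _)
  · have h_root : a ^ (k - j) = 1 := by
      refine mul_left_cancel₀ (pow_ne_zero j ha) ?_
      rw [← pow_add, Nat.add_sub_cancel' hjk.le, mul_one, h]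
    obtain ⟨d, hd⟩ : k - j ∣ n ! :=
      Nat.dvd_factorial (Nat.sub_pos_of_lt hjk) ((Nat.sub_le k j).trans hkn)
    rw [pow_succ, hd, pow_mul, h_root, one_pow, one_mul]

theorem exists_ne_map_eq_of_prod_sub_eq_zero {R ι κ : Type*} [CommRing R] [IsDomain R]
    {s : Finset ι} {t : Finset κ} (hst : #s < #t) {x : ι → R} {f : κ → R}
    (h : ∀ k ∈ t, ∏ i ∈ s, (f k - x i) = 0) :
    ∃ j ∈ t, ∃ k ∈ t, j ≠ k ∧ f j = f k := by
  have h_value : ∀ k ∈ t, ∃ i ∈ s, f k = x i := fun k hk ↦ by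
    simpa only [prod_eq_zero_iff, sub_eq_zero] using h k hk
  classical
  have h_maps : Set.MapsTo f t (s.image x) := fun k hk ↦ by
    obtain ⟨i, hi, hki⟩ := h_value k hk
    exact hki ▸ mem_image_of_mem x hi
  exact exists_ne_map_eq_of_card_lt_of_maps_to (card_image_le.trans_lt hst) h_maps

theorem pow_factorial_card_add_one_eq_self_of_isDomain {R ι : Type*} [CommRing R] [IsDomain R]
    {s : Finset ι} {x : ι → R} {a : R} (h : ∀ k ≤ #s, ∏ i ∈ s, (a ^ k - x i) = 0) :
    a ^ ((#s)! + 1) = a := by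
  obtain ⟨j, hj, k, hk, hne, hpow⟩ :=
    exists_ne_map_eq_of_prod_sub_eq_zero (t := range (#s + 1)) (by simp)
      fun k hk ↦ h k (mem_range_succ_iff.mp hk)
  obtain hjk | hkj := hne.lt_or_gt
  · exact pow_factorial_add_one_eq_self_of_pow_eq_pow hjk (mem_range_succ_iff.mp hk) hpow
  · exact pow_factorial_add_one_eq_self_of_pow_eq_pow hkj (mem_range_succ_iff.mp hj) hpow.symm

theorem eq_of_forall_isPrime_quotientMk_eq {A : Type*} [CommRing A] [IsReduced A] {a b : A}
    (h : ∀ P : Ideal A, P.IsPrime → Ideal.Quotient.mk P a = Ideal.Quotient.mk P b) : a = b :=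
  sub_eq_zero.mp <| IsNilpotent.eq_zero <| nilpotent_iff_mem_prime.mpr fun P hP ↦
    Ideal.Quotient.eq.mp (h P hP)

theorem pow_factorial_card_add_one_eq_self {A ι : Type*} [CommRing A] [IsReduced A]
    {s : Finset ι} {x : ι → A} {a : A} (h : ∀ k ≤ #s, ∏ i ∈ s, (a ^ k - x i) = 0) :
    a ^ ((#s)! + 1) = a := by
  refine eq_of_forall_isPrime_quotientMk_eq fun P _ ↦ ?_
  have h_mod : ∀ k ≤ #s,
      ∏ i ∈ s, (Ideal.Quotient.mk P a ^ k - Ideal.Quotient.mk P (x i)) = 0 := fun k hk ↦ by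
    simpa only [map_prod, map_sub, map_pow, map_zero] using congrArg (Ideal.Quotient.mk P) (h k hk)
  rw [map_pow, pow_factorial_card_add_one_eq_self_of_isDomain h_mod]

theorem stmt_2_general {A ι : Type*} [CommRing A] [IsReduced A] {s : Finset ι} {x : ι → A}
    {a : A} (h : ∀ k ≤ #s, ∏ i ∈ s, (a ^ k - x i) = 0) : ∃ b : A, a = a ^ 2 * b := by
  have h_exp : 2 + ((#s)! - 1) = (#s)! + 1 := by have := (#s).factorial_pos; omega
  exact ⟨a ^ ((#s)! - 1), by rw [← pow_add, h_exp, pow_factorial_card_add_one_eq_self h]⟩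

theorem stmt_2 (A : Type*) [CommRing A] [IsReduced A] (n : ℕ) (x : Fin n → A)
    (hCFG : ∀ y : A, ∏ i, (y - x i) = 0) :
    ∀ a : A, ∃ b : A, a = a ^ 2 * b :=
  fun a ↦ stmt_2_general fun k _ ↦ hCFG (a ^ k)
end

section
/- Let A be a commutative von Neumann regular ring and let f : A → A be a map. The following are equivalent: (1) f commutes with convex combinations, i.e., for any x₁,…,xₙ ∈ A and any complete family of orthogonal idempotents a₁,…,aₙ of A one has f(∑ᵢ aᵢxᵢ) = ∑ᵢ aᵢ f(xᵢ); (2) for all x, y ∈ A, f(x) − f(y) belongs to the principal ideal (x − y)A. -/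
/-- A complete family of orthogonal idempotents (c.f.o.i.) of a commutative ring. -/
def IsCFOI {A : Type*} [CommRing A] {n : ℕ} (a : Fin n → A) : Prop :=
  (∀ i, IsIdempotentElem (a i)) ∧ (∀ i j, i ≠ j → a i * a j = 0) ∧ ∑ i, a i = 1

/-!
Both conditions say that `f` is local at idempotents: `e x = e y` implies `e f(x) = e f(y)`.
Convex combinations glue the values of `f` on the pieces cut out by the idempotents, so they are
preserved exactly by local maps, over any ring. If `e (x - y) = 0`, then `e` kills every multiple
of `x - y`, so divisibility of increments implies locality. Conversely, if `x - y = (x - y)² b`,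
then `1 - (x - y) b` is an idempotent killing `x - y`; locality makes it kill `f(x) - f(y)`, which
is therefore the multiple `(x - y) b (f(x) - f(y))` of `x - y`.
-/

theorem isCFOI_iff_completeOrthogonalIdempotents {A : Type*} [CommRing A] {n : ℕ}
    {a : Fin n → A} : IsCFOI a ↔ CompleteOrthogonalIdempotents a := by
  simp only [IsCFOI, completeOrthogonalIdempotents_iff, orthogonalIdempotents_iff, Pairwise,
    and_assoc]

section Semiring

variable {R N M : Type*} [Semiring R] [AddCommMonoid N] [Module R N] [AddCommMonoid M] [Module R M]

variable (R) in
/-- A map between modules commutes with convex combinations if it preserves all finite sums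
`∑ i, a i • x i` whose coefficients form a complete family of orthogonal idempotents. -/
def CommutesWithConvexCombinations (f : N → M) : Prop :=
  ∀ (n : ℕ) (a : Fin n → R) (x : Fin n → N), CompleteOrthogonalIdempotents a →
    f (∑ i, a i • x i) = ∑ i, a i • f (x i)

variable (R) in
/-- A map between modules is local at idempotents if, for every idempotent `e` of the ring, it
preserves equality after multiplication by `e`. Over a commutative ring, `e • z` encodes the
restriction of `z` to the clopen subset of the spectrum on which `e = 1`. -/
def IsIdempotentLocal (f : N → M) : Prop :=
  ∀ ⦃e : R⦄, IsIdempotentElem e → ∀ ⦃x y : N⦄, e • x = e • y → e • f x = e • f y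

theorem smul_sum_smul_of_orthogonalIdempotents {ι : Type*} [Fintype ι] {a : ι → R}
    (ha : OrthogonalIdempotents a) (x : ι → N) (j : ι) :
    a j • ∑ i, a i • x i = a j • x j := by
  classical
  simp only [Finset.smul_sum, smul_smul, ha.mul_eq, ite_smul, zero_smul, Finset.sum_ite_eq,
    Finset.mem_univ, if_true]

theorem IsIdempotentLocal.map_sum_smul {ι : Type*} [Fintype ι] {f : N → M}
    (hf : IsIdempotentLocal R f) {a : ι → R} (ha : CompleteOrthogonalIdempotents a) (x : ι → N) :
    f (∑ i, a i • x i) = ∑ i, a i • f (x i) :=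
  calc
    f (∑ i, a i • x i) = ∑ j, a j • f (∑ i, a i • x i) := by
      rw [← Finset.sum_smul, ha.complete, one_smul]
    _ = ∑ j, a j • f (x j) := Finset.sum_congr rfl fun j _ ↦
      hf (ha.idem j) (smul_sum_smul_of_orthogonalIdempotents ha.toOrthogonalIdempotents x j)

end Semiring

section Ring

variable {R N M : Type*} [Ring R] [AddCommMonoid N] [Module R N] [AddCommMonoid M] [Module R M]

theorem CommutesWithConvexCombinations.isIdempotentLocal {f : N → M}
    (hf : CommutesWithConvexCombinations R f) : IsIdempotentLocal R f := by
  intro e he x y hxy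
  have glue_eq : e • x + (1 - e) • y = y := by
    rw [hxy, ← add_smul, add_sub_cancel, one_smul]
  have map_glue : f (e • x + (1 - e) • y) = e • f x + (1 - e) • f y := by
    simpa using hf 2 ![e, 1 - e] ![x, y] (.of_isIdempotentElem he)
  calc
    e • f x = e • (e • f x + (1 - e) • f y) := by
      rw [smul_add, smul_smul, smul_smul, he.eq, he.mul_one_sub_self, zero_smul, add_zero]
    _ = e • f y := by rw [← map_glue, glue_eq]

theorem commutesWithConvexCombinations_iff_isIdempotentLocal {f : N → M} :
    CommutesWithConvexCombinations R f ↔ IsIdempotentLocal R f :=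
  ⟨fun hf ↦ hf.isIdempotentLocal, fun hf _ _ x ha ↦ hf.map_sum_smul ha x⟩

end Ring

section CommRing

variable {A M : Type*} [CommRing A] [AddCommGroup M] [Module A M]

theorem mem_span_singleton_smul_top_iff {r : A} {m : M} :
    m ∈ Ideal.span {r} • (⊤ : Submodule A M) ↔ ∃ m', r • m' = m := by
  simp only [Submodule.ideal_span_singleton_smul, Submodule.mem_smul_pointwise_iff_exists,
    Submodule.mem_top, true_and]

theorem isIdempotentElem_mul_of_eq_sq_mul {a b : A} (h : a = a ^ 2 * b) :
    IsIdempotentElem (a * b) := by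
  rw [IsIdempotentElem]
  linear_combination -b * h

theorem isIdempotentLocal_of_sub_mem_span_smul_top {f : A → M}
    (hf : ∀ x y, f x - f y ∈ Ideal.span {x - y} • (⊤ : Submodule A M)) :
    IsIdempotentLocal A f := by
  intro e _ x y hxy
  obtain ⟨m, hm⟩ := mem_span_singleton_smul_top_iff.mp (hf x y)
  have e_mul_sub : e * (x - y) = 0 := by
    rw [← smul_eq_mul, smul_sub, hxy, sub_self]
  rw [← sub_eq_zero, ← smul_sub, ← hm, smul_smul, e_mul_sub, zero_smul]

theorem IsIdempotentLocal.sub_mem_span_smul_top {f : A → M} (hf : IsIdempotentLocal A f)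
    {x y b : A} (hb : x - y = (x - y) ^ 2 * b) :
    f x - f y ∈ Ideal.span {x - y} • (⊤ : Submodule A M) := by
  have compl_smul_eq : (1 - (x - y) * b) • x = (1 - (x - y) * b) • y := by
    simp only [smul_eq_mul]
    linear_combination hb
  have compl_smul_map : (1 - (x - y) * b) • (f x - f y) = 0 := by
    rw [smul_sub, hf (isIdempotentElem_mul_of_eq_sq_mul hb).one_sub compl_smul_eq, sub_self]
  refine mem_span_singleton_smul_top_iff.mpr ⟨b • (f x - f y), ?_⟩
  rw [sub_smul, one_smul, sub_eq_zero] at compl_smul_map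
  rw [smul_smul, ← compl_smul_map]

end CommRing

theorem stmt_10_general {A M : Type*} [CommRing A] [AddCommGroup M] [Module A M]
    (hreg : ∀ a : A, ∃ b : A, a = a ^ 2 * b) (f : A → M) :
    (∀ (n : ℕ) (a x : Fin n → A), IsCFOI a →
        f (∑ i, a i * x i) = ∑ i, a i • f (x i)) ↔
      ∀ x y : A, f x - f y ∈ Ideal.span {x - y} • (⊤ : Submodule A M) := by
  simp only [isCFOI_iff_completeOrthogonalIdempotents]
  refine (commutesWithConvexCombinations_iff_isIdempotentLocal (R := A) (f := f)).trans
    ⟨fun hf x y ↦ ?_, isIdempotentLocal_of_sub_mem_span_smul_top⟩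
  obtain ⟨b, hb⟩ := hreg (x - y)
  exact hf.sub_mem_span_smul_top hb

theorem stmt_10 (A : Type*) [CommRing A]
    (hreg : ∀ a : A, ∃ b : A, a = a ^ 2 * b) (f : A → A) :
    (∀ (n : ℕ) (a x : Fin n → A), IsCFOI a →
        f (∑ i, a i * x i) = ∑ i, a i * f (x i)) ↔
      (∀ x y : A, f x - f y ∈ Ideal.span {x - y}) := by
  simpa only [smul_eq_mul, Ideal.mul_top] using stmt_10_general hreg f
end

section
/- Let A be a commutative von Neumann regular ring such that there is a natural number n with |A/p| ≤ n for every prime ideal p of A (all such quotients being finite). Then there exists an integer m ≥ 1 such that for every x ∈ A the element x^m is idempotent and generates the same principal ideal as x, i.e., x^m A = xA. -/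
/-!
A reduced ring embeds in the product of its quotients by minimal primes. If these are all finite
with at most `n` elements, the order of each of their nonzero elements is at most `n`, so it
divides `n !`. Hence `x ^ (n ! + 1) = x` holds in every quotient, and therefore in the ring itself.
-/

open scoped Nat

section Monoid

variable {M : Type*} [Monoid M]

theorem isIdempotentElem_pow_of_pow_succ_eq_self {m : ℕ} {x : M} (hx : x ^ (m + 1) = x) :
    IsIdempotentElem (x ^ m) := by
  cases m with
  | zero => simpa only [pow_zero] using IsIdempotentElem.one
  | succ k =>
    calc
      x ^ (k + 1) * x ^ (k + 1) = x ^ (k + 1) * x * x ^ k := by rw [mul_assoc, ← pow_succ']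
      _ = x ^ (k + 1) := by rw [← pow_succ, hx, ← pow_succ']

theorem pow_factorial_eq_one_of_isUnit [Finite M] {n : ℕ} (hn : Nat.card M ≤ n) {u : M}
    (hu : IsUnit u) : u ^ n ! = 1 :=
  orderOf_dvd_iff_pow_eq_one.mp <|
    Nat.dvd_factorial (isOfFinOrder_iff_isUnit.mpr hu).orderOf_pos (orderOf_le_card.trans hn)

end Monoid

theorem pow_factorial_succ_eq_self {M₀ : Type*} [MonoidWithZero M₀] [IsLeftCancelMulZero M₀]
    [Finite M₀] {n : ℕ} (hn : Nat.card M₀ ≤ n) (x : M₀) : x ^ (n ! + 1) = x := by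
  obtain rfl | hx := eq_or_ne x 0
  · exact zero_pow (Nat.succ_ne_zero _)
  · have hunit : IsUnit x :=
      (IsLeftCancelMulZero.mul_left_cancel_of_ne_zero hx).isUnit_of_finite
    rw [pow_succ, pow_factorial_eq_one_of_isUnit hn hunit, one_mul]

theorem isReduced_of_forall_exists_eq_sq_mul {M₀ : Type*} [MonoidWithZero M₀]
    (h : ∀ a : M₀, ∃ b : M₀, a = a ^ 2 * b) : IsReduced M₀ := by
  refine (isReduced_iff_pow_one_lt 2 one_lt_two).mpr fun a ha ↦ ?_
  obtain ⟨b, hb⟩ := h a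
  rw [hb, ha, zero_mul]

theorem span_singleton_pow_eq_of_pow_succ_eq_self {R : Type*} [CommSemiring R] {m : ℕ}
    (hm : m ≠ 0) {x : R} (hx : x ^ (m + 1) = x) : Ideal.span {x ^ m} = Ideal.span {x} :=
  le_antisymm (Ideal.span_singleton_le_span_singleton.mpr (dvd_pow_self x hm))
    (Ideal.span_singleton_le_span_singleton.mpr ⟨x, by rw [← pow_succ, hx]⟩)

section Reduced

variable {R : Type*} [CommRing R] [IsReduced R]

theorem eq_of_forall_minimalPrimes_mk_eq {x y : R}
    (h : ∀ p ∈ minimalPrimes R, Ideal.Quotient.mk p x = Ideal.Quotient.mk p y) : x = y := by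
  have hmem : x - y ∈ sInf (minimalPrimes R) :=
    Submodule.mem_sInf.mpr fun p hp ↦ Ideal.Quotient.eq.mp (h p hp)
  have hnil : x - y ∈ nilradical R := by
    rwa [minimalPrimes, Ideal.sInf_minimalPrimes] at hmem
  exact sub_eq_zero.mp (IsNilpotent.eq_zero (mem_nilradical.mp hnil))

theorem pow_factorial_succ_eq_self_of_minimalPrimes {n : ℕ}
    (hfin : ∀ p ∈ minimalPrimes R, Finite (R ⧸ p) ∧ Nat.card (R ⧸ p) ≤ n) (x : R) :
    x ^ (n ! + 1) = x := by
  refine eq_of_forall_minimalPrimes_mk_eq fun p hp ↦ ?_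
  obtain ⟨_, hcard⟩ := hfin p hp
  have : p.IsPrime := hp.1.1
  rw [map_pow, pow_factorial_succ_eq_self hcard]

theorem stmt_12_general (n : ℕ)
    (hfin : ∀ p ∈ minimalPrimes R, Finite (R ⧸ p) ∧ Nat.card (R ⧸ p) ≤ n) :
    ∃ m : ℕ, 1 ≤ m ∧ ∀ x : R, IsIdempotentElem (x ^ m) ∧
      Ideal.span {x ^ m} = Ideal.span {x} := by
  refine ⟨n !, Nat.factorial_pos n, fun x ↦ ?_⟩
  have hx : x ^ (n ! + 1) = x := pow_factorial_succ_eq_self_of_minimalPrimes hfin x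
  exact ⟨isIdempotentElem_pow_of_pow_succ_eq_self hx,
    span_singleton_pow_eq_of_pow_succ_eq_self n.factorial_ne_zero hx⟩

end Reduced

theorem stmt_12 (A : Type*) [CommRing A]
    (hreg : ∀ a : A, ∃ b : A, a = a ^ 2 * b)
    (n : ℕ) (hfin : ∀ (p : Ideal A), p.IsPrime →
      Finite (A ⧸ p) ∧ Nat.card (A ⧸ p) ≤ n) :
    ∃ m : ℕ, 1 ≤ m ∧ ∀ x : A, IsIdempotentElem (x ^ m) ∧
      Ideal.span {x ^ m} = Ideal.span {x} :=
  have := isReduced_of_forall_exists_eq_sq_mul hreg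
  stmt_12_general n fun p hp ↦ hfin p hp.1.1
end
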